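/- Let ℂ∞ denote the Riemann sphere (OnePoint ℂ). Let U ⊆ ℂ∞ be a simply connected open set whose boundary X = ∂U contains at least two points, and let V ≠ U be a connected component of ℂ∞ ∖ X such that ∂V has nonempty interior relative to X. If X is irreducible about some finite subset of X, then ∂V contains an indecomposable subcontinuum with nonempty interior relative to X. -/

import Mathlib

open Set Topology

/-- The Riemann sphere, as the one-point compactification of `ℂ`. -/
abbrev RiemannSphere : Type := OnePoint ℂ

/-- A subcontinuum (of an ambient space) is a nonempty compact connected set;
nonemptiness is part of `IsConnected`. -/
def IsSubcontinuum {α : Type*} [TopologicalSpace α] (K : Set α) : Prop :=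
  IsCompact K ∧ IsConnected K

/-- A set is indecomposable if it is not the union of two of its proper subcontinua. -/
def IsIndecomposableSet {α : Type*} [TopologicalSpace α] (K : Set α) : Prop :=
  ∀ K₁ K₂ : Set α, IsSubcontinuum K₁ → K₁ ⊆ K → IsSubcontinuum K₂ → K₂ ⊆ K →
    K₁ ∪ K₂ = K → K₁ = K ∨ K₂ = K

/-- The interior of `Z` relative to `X`, i.e. the interior of the corresponding subset
of the subspace `X`. -/
def relInterior {α : Type*} [TopologicalSpace α] (X Z : Set α) : Set X :=
  interior ((↑) ⁻¹' Z : Set X)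

/-! By Janiszewski's theorem, which rests on Eilenberg's characterization of the separation of
points in the plane by continuous logarithms, `X = ∂U` and `Y = ∂V` are connected, and no
subcontinuum of `X` separates two points of `Y` in `X`.

Suppose that no subcontinuum of `Y` with nonempty interior in `X` is indecomposable. Repeated
splitting then gives infinitely many subcontinua `Kᵢ` of `Y`, each with a nonempty open core which
misses all the others. For every `i` there is a connected side `Sᵢ` of `X \ Kᵢ` that contains
`Y \ Kᵢ`. If `X` is irreducible about the finite set `A`, then some `i ≠ j` have closures of `Sᵢ`
and `Sⱼ` omitting the same points of `A`, so the continuum `(X \ Sᵢ) ∪ closure Sⱼ` contains `A`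
but misses the core of `Kⱼ`, which is absurd.
-/

section Subcontinua

variable {X : Type*} [TopologicalSpace X] {O K L M S R Y A : Set X}

theorem IsSubcontinuum.union (hK : IsSubcontinuum K) (hL : IsSubcontinuum L)
    (hKL : (K ∩ L).Nonempty) : IsSubcontinuum (K ∪ L) :=
  ⟨hK.1.union hL.1, hK.2.union hKL hL.2⟩

theorem IsSubcontinuum.sInter_of_isChain [T2Space X] {c : Set (Set X)}
    (hc : IsChain (· ⊆ ·) c) (hne : c.Nonempty) (hcont : ∀ s ∈ c, IsSubcontinuum s) :
    IsSubcontinuum (⋂₀ c) := by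
  have hcompact : ∀ s ∈ c, IsCompact s := fun s hs => (hcont s hs).1
  have hclosed : ∀ s ∈ c, IsClosed s := fun s hs => (hcompact s hs).isClosed
  have : Nonempty c := hne.to_subtype
  have hdir : Directed (· ⊇ ·) ((↑) : c → Set X) := fun a b =>
    (hc.total a.2 b.2).elim (fun h => ⟨a, le_rfl, h⟩) fun h => ⟨b, h, le_rfl⟩
  have hinter : IsCompact (⋂₀ c) :=
    let ⟨s, hs⟩ := hne
    (hcompact s hs).of_isClosed_subset (isClosed_sInter hclosed) (sInter_subset_of_mem hs)
  refine ⟨hinter, ?_, ?_⟩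
  · rw [sInter_eq_iInter]
    exact IsCompact.nonempty_iInter_of_directed_nonempty_isCompact_isClosed _ hdir
      (fun s => (hcont s s.2).2.1) (fun s => hcompact s s.2) (fun s => hclosed s s.2)
  rw [isPreconnected_iff_subset_of_fully_disjoint_closed hinter.isClosed]
  intro u v hu hv huv hdisj
  obtain ⟨u', v', hu', hv', huu', hvv', hdisj'⟩ := SeparatedNhds.of_isCompact_isCompact
    (hinter.inter_right hu) (hinter.inter_right hv)
    (hdisj.mono inter_subset_right inter_subset_right)
  have hcover : ⋂₀ c ⊆ u' ∪ v' := fun x hx =>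
    (huv hx).imp (fun h => huu' ⟨hx, h⟩) (fun h => hvv' ⟨hx, h⟩)
  obtain ⟨⟨s, hs⟩, hsub⟩ := exists_subset_nhds_of_isCompact' hdir (fun s => hcompact s s.2)
    (fun s => hclosed s s.2) fun x hx =>
      (hu'.union hv').mem_nhds (hcover (by rwa [sInter_eq_iInter]))
  have hinter_sub : ⋂₀ c ⊆ s := sInter_subset_of_mem hs
  refine (isPreconnected_iff_subset_of_disjoint.1 (hcont s hs).2.2 u' v' hu' hv' hsub
    (by rw [hdisj'.inter_eq, inter_empty])).imp (fun h x hx => ?_) (fun h x hx => ?_)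
  · exact (huv hx).resolve_right fun hxv =>
      disjoint_left.1 hdisj' (h (hinter_sub hx)) (hvv' ⟨hx, hxv⟩)
  · exact (huv hx).resolve_left fun hxu =>
      disjoint_left.1 hdisj' (huu' ⟨hx, hxu⟩) (h (hinter_sub hx))

theorem exists_minimal_isSubcontinuum_superset [T2Space X] (hOK : O ⊆ K)
    (hK : IsSubcontinuum K) :
    ∃ M ⊆ K, Minimal (fun M => O ⊆ M ∧ IsSubcontinuum M) M :=
  zorn_superset_nonempty {M | O ⊆ M ∧ IsSubcontinuum M}
    (fun c hc hchain hne => ⟨⋂₀ c, ⟨subset_sInter fun _ hs => (hc hs).1,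
      .sInter_of_isChain hchain hne fun _ hs => (hc hs).2⟩, fun _ => sInter_subset_of_mem⟩)
    K ⟨hOK, hK⟩

/-- `Z` is irreducible about its subset `A`: no proper subset of `Z` is a subcontinuum
containing `A`. -/
def IsIrreducibleAbout (Z A : Set X) : Prop :=
  A ⊆ Z ∧ ∀ K : Set X, IsSubcontinuum K → K ⊆ Z → A ⊆ K → K = Z

/-- A separation `S | R` of the complement of `M`. Either side may be empty. -/
structure IsSeparation (M S R : Set X) : Prop where
  isOpen_left : IsOpen S
  isOpen_right : IsOpen R
  disjoint : Disjoint S R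
  union_eq : S ∪ R = Mᶜ

namespace IsSeparation

theorem disjoint_left (h : IsSeparation M S R) : Disjoint S M :=
  subset_compl_iff_disjoint_right.1 (h.union_eq ▸ subset_union_left)

theorem split {u v : Set X} (h : IsSeparation M S R) (hu : IsOpen u) (hv : IsOpen v)
    (hS : S ⊆ u ∪ v) (huv : S ∩ (u ∩ v) = ∅) : IsSeparation M (S ∩ u) (S ∩ v ∪ R) where
  isOpen_left := h.isOpen_left.inter hu
  isOpen_right := (h.isOpen_left.inter hv).union h.isOpen_right
  disjoint := by
    rw [disjoint_union_right, disjoint_iff_inter_eq_empty, ← inter_inter_distrib_left]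
    exact ⟨huv, h.disjoint.mono_left inter_subset_left⟩
  union_eq := by
    rw [← union_assoc, ← inter_union_distrib_left, inter_eq_left.2 hS, h.union_eq]

theorem compl_subset_of_isClosed_cover [PreconnectedSpace X] {u v : Set X}
    (h : IsSeparation M S R) (hM : M.Nonempty) (hu : IsClosed u) (hv : IsClosed v)
    (hcover : Sᶜ ⊆ u ∪ v) (huv : Disjoint u v) (hMu : M ⊆ u) : Sᶜ ⊆ u := by
  have hopen : Sᶜ ∩ v = R ∩ uᶜ := by
    have hcompl (x : X) : x ∈ S ∨ x ∈ R ↔ x ∉ M := Set.ext_iff.1 h.union_eq x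
    have hSR (x : X) (hS : x ∈ S) : x ∉ R := Set.disjoint_left.1 h.disjoint hS
    have huv (x : X) (hu : x ∈ u) : x ∉ v := Set.disjoint_left.1 huv hu
    grind
  have hclopen : IsClopen (Sᶜ ∩ v) :=
    ⟨h.isOpen_left.isClosed_compl.inter hv, hopen ▸ h.isOpen_right.inter hu.isOpen_compl⟩
  have hempty : Sᶜ ∩ v = ∅ := (isClopen_iff.1 hclopen).resolve_right fun huniv =>
    let ⟨x, hx⟩ := hM
    (hopen ▸ huniv ▸ mem_univ x : x ∈ R ∩ uᶜ).2 (hMu hx)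
  exact fun x hx => (hcover hx).resolve_right fun hxv => hempty.le ⟨hx, hxv⟩

theorem isSubcontinuum_compl_left [CompactSpace X] [PreconnectedSpace X]
    (h : IsSeparation M S R) (hM : IsSubcontinuum M) : IsSubcontinuum Sᶜ := by
  have hMS : M ⊆ Sᶜ := h.disjoint_left.subset_compl_left
  have hMclosed : IsClosed M := by
    rw [← isOpen_compl_iff, ← h.union_eq]
    exact h.isOpen_left.union h.isOpen_right
  refine ⟨h.isOpen_left.isClosed_compl.isCompact, hM.2.1.mono hMS, ?_⟩
  rw [isPreconnected_iff_subset_of_fully_disjoint_closed h.isOpen_left.isClosed_compl]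
  intro u v hu hv hcover huv
  exact ((isPreconnected_iff_subset_of_fully_disjoint_closed hMclosed).1 hM.2.2 u v hu hv
    (hMS.trans hcover) huv).imp
    (h.compl_subset_of_isClosed_cover hM.2.1 hu hv hcover huv)
    (h.compl_subset_of_isClosed_cover hM.2.1 hv hu (union_comm u v ▸ hcover) huv.symm)

theorem inter_nonempty_of_isIrreducibleAbout [CompactSpace X] [PreconnectedSpace X]
    (h : IsSeparation M S R) (hM : IsSubcontinuum M) (hirr : IsIrreducibleAbout univ A)
    (hS : S.Nonempty) : (A ∩ S).Nonempty := by
  by_contra hAS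
  have huniv : Sᶜ = univ := hirr.2 _ (h.isSubcontinuum_compl_left hM) (subset_univ _)
    fun a ha haS => hAS ⟨a, ha, haS⟩
  exact hS.ne_empty (compl_univ_iff.1 huniv)

end IsSeparation

/-- No subcontinuum of `X` separates two points of `Y`. -/
def NotSeparatedBySubcontinua (Y : Set X) : Prop :=
  ∀ ⦃M S R : Set X⦄, IsSubcontinuum M → IsSeparation M S R → Disjoint Y S ∨ Disjoint Y R

theorem NotSeparatedBySubcontinua.mono {Z : Set X} (hZ : NotSeparatedBySubcontinua Z)
    (hYZ : Y ⊆ Z) : NotSeparatedBySubcontinua Y := fun _ _ _ hM h =>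
  (hZ hM h).imp (Disjoint.mono_left hYZ) (Disjoint.mono_left hYZ)

-- Among the sides containing `Y \ K`, one with the fewest points of `A` cannot be split further.
theorem NotSeparatedBySubcontinua.exists_isPreconnected_side [CompactSpace X]
    [PreconnectedSpace X] (hY : NotSeparatedBySubcontinua Y) (hA : A.Finite)
    (hirr : IsIrreducibleAbout univ A) (hKclosed : IsClosed K) (hK : IsSubcontinuum K) :
    ∃ S R, IsSeparation K S R ∧ Y \ K ⊆ S ∧ IsPreconnected S := by
  have htriv : IsSeparation K Kᶜ ∅ :=
    ⟨hKclosed.isOpen_compl, isOpen_empty, disjoint_empty _, union_empty _⟩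
  obtain ⟨S, ⟨⟨R, hSR⟩, hYS⟩, hmin⟩ := exists_minimalFor_of_wellFoundedLT
    (fun S => (∃ R, IsSeparation K S R) ∧ Y \ K ⊆ S) (fun S => (A ∩ S).ncard)
    ⟨Kᶜ, ⟨∅, htriv⟩, fun _ hx => hx.2⟩
  have hside : ∀ u v, IsOpen u → IsOpen v → S ⊆ u ∪ v → S ∩ (u ∩ v) = ∅ →
      Disjoint Y (S ∩ v) → S ⊆ u := by
    intro u v hu hv hcover huv hYv
    by_contra hSu
    have hSv : (S ∩ v).Nonempty :=
      let ⟨x, hxS, hxu⟩ := not_subset.1 hSu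
      ⟨x, hxS, (hcover hxS).resolve_left hxu⟩
    obtain ⟨a, haA, haS, hav⟩ := (hSR.split hv hu (union_comm u v ▸ hcover)
      (inter_comm u v ▸ huv)).inter_nonempty_of_isIrreducibleAbout hK hirr hSv
    have hYu : Y \ K ⊆ S ∩ u := fun x hx => ⟨hYS hx, (hcover (hYS hx)).resolve_right
      fun hxv => disjoint_left.1 hYv hx.1 ⟨hYS hx, hxv⟩⟩
    have hlt : (A ∩ (S ∩ u)).ncard < (A ∩ S).ncard :=
      ncard_lt_ncard ⟨by gcongr; exact inter_subset_left, fun h =>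
        huv.le ⟨haS, (h ⟨haA, haS⟩).2.2, hav⟩⟩ (hA.inter_of_left S)
    exact hlt.not_ge (hmin ⟨⟨_, hSR.split hu hv hcover huv⟩, hYu⟩ hlt.le)
  refine ⟨S, R, hSR, hYS, isPreconnected_iff_subset_of_disjoint.2 fun u v hu hv hcover huv => ?_⟩
  rcases hY hK (hSR.split hu hv hcover huv) with h | h
  · exact .inr (hside v u hv hu (union_comm u v ▸ hcover) (inter_comm u v ▸ huv) h)
  · exact .inl (hside u v hu hv hcover huv (h.mono_right subset_union_left))

end Subcontinua

-- `s n` is the left half of the `n`-fold right half of `p₀`.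
theorem exists_seq_pairwise_of_split {P : Type*} [Preorder P] {D : P → P → Prop} {p₀ : P}
    (hsymm : ∀ {a b}, D a b → D b a) (hmono : ∀ {a b c}, D a b → c ≤ b → D a c)
    (hsplit : ∀ p ≤ p₀, ∃ l ≤ p, ∃ r ≤ p, D l r) :
    ∃ s : ℕ → P, (∀ n, s n ≤ p₀) ∧ Pairwise (Function.onFun D s) := by
  have : Nonempty P := ⟨p₀⟩
  choose! l hl r hr hD using hsplit
  let q (n : ℕ) : P := r^[n] p₀
  have hq_succ (n : ℕ) : q (n + 1) = r (q n) := Function.iterate_succ_apply' r n p₀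
  have hq_le (n : ℕ) : q n ≤ p₀ := by
    induction n with
    | zero => exact le_rfl
    | succ n ih => exact hq_succ n ▸ (hr _ ih).trans ih
  have hq_anti : Antitone q :=
    antitone_nat_of_succ_le fun n => hq_succ n ▸ hr _ (hq_le n)
  have hlt {i j : ℕ} (hij : i < j) : D (l (q i)) (l (q j)) :=
    hmono (hD _ (hq_le i)) ((hl _ (hq_le j)).trans (hq_succ i ▸ hq_anti hij))
  exact ⟨fun n => l (q n), fun n => (hl _ (hq_le n)).trans (hq_le n), fun i j hij =>
    hij.lt_or_gt.elim hlt fun hji => hsymm (hlt hji)⟩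

/-- A subcontinuum `carrier` with nonempty interior, together with a chosen nonempty open subset
`core` of it. Marked continua are ordered by inclusion of both parts. -/
structure MarkedContinuum (X : Type*) [TopologicalSpace X] where
  core : Set X
  carrier : Set X
  isOpen_core : IsOpen core
  core_nonempty : core.Nonempty
  core_subset : core ⊆ carrier
  isSubcontinuum : IsSubcontinuum carrier

namespace MarkedContinuum

variable {X : Type*} [TopologicalSpace X] {A Y : Set X}

instance : Preorder (MarkedContinuum X) := Preorder.lift fun K => (K.core, K.carrier)

/-- Neither core meets the other carrier; the carriers themselves may intersect. -/
def Apart (K L : MarkedContinuum X) : Prop :=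
  Disjoint K.core L.carrier ∧ Disjoint L.core K.carrier

-- In a minimal subcontinuum containing the core, both parts of a decomposition omit some of it.
theorem exists_apart_le [T2Space X] (K : MarkedContinuum X)
    (hdec : ∀ M ⊆ K.carrier, IsSubcontinuum M → (interior M).Nonempty →
      ¬ IsIndecomposableSet M) :
    ∃ L ≤ K, ∃ R ≤ K, Apart L R := by
  obtain ⟨M, hMK, hM⟩ := exists_minimal_isSubcontinuum_superset K.core_subset K.isSubcontinuum
  obtain ⟨hcoreM, hMcont⟩ := hM.prop
  have hMdec := hdec M hMK hMcont (K.core_nonempty.mono (interior_maximal hcoreM K.isOpen_core))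
  simp only [IsIndecomposableSet, not_forall, not_or] at hMdec
  obtain ⟨M₁, M₂, hM₁, hM₁M, hM₂, hM₂M, hunion, hne₁, hne₂⟩ := hMdec
  have hcore_diff {N : Set X} (hN : IsSubcontinuum N) (hNM : N ⊆ M) (hne : N ≠ M) :
      (K.core \ N).Nonempty :=
    sdiff_nonempty.2 fun h => hne (hNM.antisymm (hM.le_of_le ⟨h, hN⟩ hNM))
  have hcover : K.core ⊆ M₁ ∪ M₂ := hunion ▸ hcoreM
  let L : MarkedContinuum X := ⟨K.core \ M₁, M₂, K.isOpen_core.sdiff hM₁.1.isClosed,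
    hcore_diff hM₁ hM₁M hne₁, sdiff_subset_iff.2 hcover, hM₂⟩
  let R : MarkedContinuum X := ⟨K.core \ M₂, M₁, K.isOpen_core.sdiff hM₂.1.isClosed,
    hcore_diff hM₂ hM₂M hne₂, sdiff_subset_iff.2 (union_comm M₁ M₂ ▸ hcover), hM₁⟩
  exact ⟨L, ⟨sdiff_subset, hM₂M.trans hMK⟩, R, ⟨sdiff_subset, hM₁M.trans hMK⟩,
    disjoint_sdiff_left, disjoint_sdiff_left⟩

theorem exists_seq_pairwise_apart [T2Space X] (K : MarkedContinuum X)
    (hdec : ∀ M ⊆ K.carrier, IsSubcontinuum M → (interior M).Nonempty →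
      ¬ IsIndecomposableSet M) :
    ∃ L : ℕ → MarkedContinuum X, (∀ n, L n ≤ K) ∧ Pairwise (Function.onFun Apart L) :=
  exists_seq_pairwise_of_split And.symm
    (fun h hle => ⟨h.1.mono_right hle.2, h.2.mono_left hle.1⟩)
    fun L hL => L.exists_apart_le fun M hM => hdec M (hM.trans hL.2)

-- Take for each `i` the connected side `S i` of `K i` that contains the rest of `Y`. If `S i` and
-- `S j` leave out the same points of `A`, then `(S i)ᶜ ∪ closure (S j)` is a subcontinuum
-- containing `A` but missing the core of `K j`.
theorem not_pairwise_apart [CompactSpace X] [T2Space X] [PreconnectedSpace X]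
    {ι : Type*} [Infinite ι] (hA : A.Finite) (hirr : IsIrreducibleAbout univ A)
    (hY : NotSeparatedBySubcontinua Y) {K : ι → MarkedContinuum X}
    (hKY : ∀ i, (K i).carrier ⊆ Y) : ¬ Pairwise (Function.onFun Apart K) := by
  intro hapart
  choose S R hSR hYS hS using fun i => hY.exists_isPreconnected_side hA hirr
    (K i).isSubcontinuum.1.isClosed (K i).isSubcontinuum
  have hcore_sub {i j : ι} (hij : i ≠ j) : (K i).core ⊆ S j := fun x hx =>
    hYS j ⟨hKY i ((K i).core_subset hx), disjoint_left.1 (hapart hij).1 hx⟩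
  have hcore_disj (i : ι) : Disjoint (K i).core (S i) :=
    ((hSR i).disjoint_left.mono_right (K i).core_subset).symm
  have : Finite (𝒫 A) := hA.finite_subsets
  obtain ⟨i, j, hij, hmissed⟩ := Finite.exists_ne_map_eq_of_infinite
    fun i => (⟨A \ closure (S i), sdiff_subset⟩ : 𝒫 A)
  obtain ⟨x, hx⟩ := (K i).core_nonempty
  obtain ⟨y, hy⟩ := (K j).core_nonempty
  have hxSj : x ∈ S j := hcore_sub hij hx
  have hclosure : IsSubcontinuum (closure (S j)) :=
    ⟨isClosed_closure.isCompact, ⟨x, subset_closure hxSj⟩, (hS j).closure⟩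
  have hcont : IsSubcontinuum ((S i)ᶜ ∪ closure (S j)) :=
    ((hSR i).isSubcontinuum_compl_left (K i).isSubcontinuum).union hclosure
      ⟨x, disjoint_left.1 (hcore_disj i) hx, subset_closure hxSj⟩
  have hAsub : A ⊆ (S i)ᶜ ∪ closure (S j) := fun a ha => or_iff_not_imp_right.2 fun haj haS =>
    ((Subtype.ext_iff.1 hmissed).ge ⟨ha, haj⟩).2 (subset_closure haS)
  rcases (hirr.2 _ hcont (subset_univ _) hAsub).ge (mem_univ y) with hyi | hyj
  · exact hyi (hcore_sub hij.symm hy)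
  · exact disjoint_left.1 ((hcore_disj j).closure_right (K j).isOpen_core) hy hyj

end MarkedContinuum

theorem exists_isIndecomposableSet_of_isIrreducibleAbout {X : Type*} [TopologicalSpace X]
    [CompactSpace X] [T2Space X] [PreconnectedSpace X] {A Y : Set X} (hA : A.Finite)
    (hirr : IsIrreducibleAbout univ A) (hY : IsSubcontinuum Y)
    (hYint : (interior Y).Nonempty) (hYsep : NotSeparatedBySubcontinua Y) :
    ∃ K ⊆ Y, IsSubcontinuum K ∧ IsIndecomposableSet K ∧ (interior K).Nonempty := by
  by_contra! hdec
  obtain ⟨K, hKY, hK⟩ := MarkedContinuum.exists_seq_pairwise_apart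
    ⟨interior Y, Y, isOpen_interior, hYint, interior_subset, hY⟩
    fun M hMY hM hMint hMind => hMint.ne_empty (hdec M hMY hM hMind)
  exact MarkedContinuum.not_pairwise_apart hA hirr hYsep (fun i => (hKY i).2) hK

section Frontiers

variable {X : Type*} [TopologicalSpace X]

theorem frontier_connectedComponentIn_subset_compl [LocallyConnectedSpace X] {F : Set X}
    (hF : IsOpen F) (x : X) :
    frontier (connectedComponentIn F x) ⊆ Fᶜ := by
  intro y hy hyF
  have hyx : y ∉ connectedComponentIn F x := by
    rw [hF.connectedComponentIn.frontier_eq] at hy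
    exact hy.2
  obtain ⟨z, hzy, hzx⟩ := mem_closure_iff.1 (frontier_subset_closure hy) _
    hF.connectedComponentIn (mem_connectedComponentIn hyF)
  rw [connectedComponentIn_eq hzx, ← connectedComponentIn_eq hzy] at hyx
  exact hyx (mem_connectedComponentIn hyF)

theorem subset_or_disjoint_closure_of_disjoint_frontier {C O : Set X} (hC : IsPreconnected C)
    (hO : IsOpen O) (hCO : Disjoint C (frontier O)) : C ⊆ O ∨ Disjoint C (closure O) := by
  rw [← subset_compl_iff_disjoint_right]
  refine isPreconnected_iff_subset_of_disjoint.1 hC O (closure O)ᶜ hO isClosed_closure.isOpen_compl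
    (fun x hx => or_iff_not_imp_left.2 fun hxO hxcl => ?_) ?_
  · exact disjoint_left.1 hCO hx (hO.frontier_eq ▸ ⟨hxcl, hxO⟩)
  · rw [(disjoint_compl_right_iff_subset.2 subset_closure).inter_eq, inter_empty]

end Frontiers

section ContinuousLogarithm

variable {X : Type*} [TopologicalSpace X] {f g φ : X → ℂ} {E E₁ E₂ S : Set X}

/-- `f` has a continuous logarithm on `E`. In particular `f` has no zero in `E`. -/
def HasContinuousLogOn (f : X → ℂ) (E : Set X) : Prop :=
  ∃ φ : X → ℂ, ContinuousOn φ E ∧ EqOn (Complex.exp ∘ φ) f E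

namespace HasContinuousLogOn

theorem mono (h : HasContinuousLogOn f E₂) (hE : E₁ ⊆ E₂) : HasContinuousLogOn f E₁ :=
  h.imp fun _ hφ => ⟨hφ.1.mono hE, hφ.2.mono hE⟩

theorem exists_eqOn_of_isPreconnected (h : HasContinuousLogOn f E) (hS : IsPreconnected S)
    (hSE : S ⊆ E) (hφ : ContinuousOn φ S) (hφf : EqOn (Complex.exp ∘ φ) f S) :
    ∃ ψ : X → ℂ, ContinuousOn ψ E ∧ EqOn (Complex.exp ∘ ψ) f E ∧ EqOn φ ψ S := by
  obtain ⟨ψ, hψ, hψf⟩ := h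
  rcases S.eq_empty_or_nonempty with rfl | ⟨x, hx⟩
  · exact ⟨ψ, hψ, hψf, eqOn_empty _ _⟩
  have hexp : ∀ y ∈ S, Complex.exp (φ y - ψ y) = 1 := fun y hy => by
    have heq : Complex.exp (φ y) = Complex.exp (ψ y) := (hφf hy).trans (hψf (hSE hy)).symm
    rw [Complex.exp_sub, heq, div_self (Complex.exp_ne_zero _)]
  have hconst : ∀ y ∈ S, φ y - ψ y = φ x - ψ x := fun y hy =>
    Complex.isCoveringMap_exp.constOn_of_comp hS (hφ.sub (hψ.mono hSE))
      (fun y hy z hz => Subtype.ext ((hexp y hy).trans (hexp z hz).symm)) hy hx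
  refine ⟨fun y => ψ y + (φ x - ψ x), hψ.add continuousOn_const, fun y hy => ?_, fun y hy => ?_⟩
  · simpa only [Function.comp_apply, Complex.exp_add, hexp x hx, mul_one] using hψf hy
  · exact (add_sub_cancel (ψ y) (φ y)).symm.trans (congrArg _ (hconst y hy))

theorem union (h₁ : HasContinuousLogOn f E₁) (h₂ : HasContinuousLogOn f E₂)
    (hE₁ : IsClosed E₁) (hE₂ : IsClosed E₂) (hconn : IsPreconnected (E₁ ∩ E₂)) :
    HasContinuousLogOn f (E₁ ∪ E₂) := by
  classical
  obtain ⟨φ, hφ, hφf⟩ := h₁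
  obtain ⟨ψ, hψ, hψf, heq⟩ := h₂.exists_eqOn_of_isPreconnected hconn inter_subset_right
    (hφ.mono inter_subset_left) (hφf.mono inter_subset_left)
  have heqφ : EqOn (E₁.piecewise φ ψ) φ E₁ := piecewise_eqOn _ _ _
  have heqψ : EqOn (E₁.piecewise φ ψ) ψ E₂ := fun x hx => by
    by_cases hx₁ : x ∈ E₁
    · rw [heqφ hx₁, heq ⟨hx₁, hx⟩]
    · exact piecewise_eq_of_notMem _ _ _ hx₁
  exact ⟨E₁.piecewise φ ψ, (hφ.congr heqφ).union_of_isClosed (hψ.congr heqψ) hE₁ hE₂,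
    (heqφ.comp_left.trans hφf).union (heqψ.comp_left.trans hψf)⟩

theorem of_norm_sub_lt (h : HasContinuousLogOn f E) (hg : ContinuousOn g E)
    (hfg : ∀ x ∈ E, ‖g x - f x‖ < ‖f x‖) : HasContinuousLogOn g E := by
  obtain ⟨φ, hφ, hφf⟩ := h
  have hf : ContinuousOn f E := (Complex.continuous_exp.comp_continuousOn hφ).congr hφf.symm
  have hf₀ : ∀ x ∈ E, f x ≠ 0 := fun x hx => norm_pos_iff.1 ((norm_nonneg _).trans_lt (hfg x hx))
  have hslit : ∀ x ∈ E, g x / f x ∈ Complex.slitPlane := fun x hx => by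
    have hlt : ‖(g x - f x) / f x‖ < 1 := by
      rw [norm_div]
      exact (div_lt_one (norm_pos_iff.2 (hf₀ x hx))).2 (hfg x hx)
    have heq : 1 + (g x - f x) / f x = g x / f x := by
      rw [sub_div, div_self (hf₀ x hx), add_sub_cancel]
    exact heq ▸ Complex.mem_slitPlane_of_norm_lt_one hlt
  refine ⟨fun x => φ x + Complex.log (g x / f x), hφ.add ((hg.div hf hf₀).clog hslit),
    fun x hx => ?_⟩
  have hexp : Complex.exp (φ x) = f x := hφf hx
  rw [Function.comp_apply, Complex.exp_add, hexp,
    Complex.exp_log (Complex.slitPlane_ne_zero (hslit x hx)), mul_div_cancel₀ _ (hf₀ x hx)]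

end HasContinuousLogOn

end ContinuousLogarithm

section PlaneSeparation

variable {E Ω : Set ℂ} {p q : ℂ}

-- Otherwise `F` has a continuous logarithm, which grows by `2πi` around the circle.
theorem exists_eq_zero_of_eqOn_sphere {F : ℂ → ℂ} {R : ℝ} (hF : Continuous F) (hR : 0 < R)
    (hsphere : EqOn F (· - p) (Metric.sphere p R)) : ∃ z, F z = 0 := by
  by_contra! hF₀
  obtain ⟨φ, hφ, hφF⟩ := Complex.exists_continuousOn_eqOn_exp_comp (U := univ)
    ((Homeomorph.Set.univ ℂ).toHomotopyEquiv.simplyConnectedSpace) isOpen_univ hF.continuousOn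
    fun ⟨z, _, hz⟩ => hF₀ z hz
  have hφ : Continuous φ := continuousOn_univ.1 hφ
  have hexp : ∀ t : ℝ, Complex.exp (φ (circleMap p R t) - t * Complex.I) = R := fun t => by
    have hlog : Complex.exp (φ (circleMap p R t)) = circleMap p R t - p :=
      (hφF (mem_univ _)).trans (hsphere (circleMap_mem_sphere p hR.le t))
    rw [Complex.exp_sub, hlog, circleMap_sub_center, circleMap_zero,
      mul_div_cancel_right₀ _ (Complex.exp_ne_zero _)]
  have hconst : φ (circleMap p R 0) = φ (circleMap p R 0) - 2 * Real.pi * Complex.I := by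
    simpa [(periodic_circleMap p R).eq] using Complex.isCoveringMap_exp.constOn_of_comp
      (g := fun t : ℝ => φ (circleMap p R t) - t * Complex.I) isPreconnected_univ (by fun_prop)
      (fun s _ t _ => Subtype.ext ((hexp s).trans (hexp t).symm))
      (mem_univ 0) (mem_univ (2 * Real.pi))
  exact Complex.two_pi_I_ne_zero (sub_eq_self.1 hconst.symm)

-- Extending the logarithm over `Ω` would give a zero-free map equal to `z - p` outside `Ω`.
theorem not_hasContinuousLogOn_frontier (hΩ : Bornology.IsBounded Ω) (hp : p ∈ Ω) :
    ¬ HasContinuousLogOn (· - p) (frontier Ω) := by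
  classical
  rintro ⟨φ, hφ, hφp⟩
  obtain ⟨ψ, hψ⟩ := ContinuousMap.exists_restrict_eq isClosed_frontier
    (⟨(frontier Ω).domRestrict φ, hφ.domRestrict⟩ : C(frontier Ω, ℂ))
  have hψp : ∀ z ∈ frontier Ω, Complex.exp (ψ z) = z - p := fun z hz =>
    (congrArg Complex.exp (DFunLike.congr_fun hψ ⟨z, hz⟩)).trans (hφp hz)
  obtain ⟨R, hR, hΩR⟩ := hΩ.subset_ball_lt 0 p
  have hcont : Continuous fun z => if z ∈ Ω then Complex.exp (ψ z) else z - p :=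
    Continuous.if hψp (by fun_prop) (by fun_prop)
  obtain ⟨z, hz⟩ := exists_eq_zero_of_eqOn_sphere (p := p) hcont hR fun z hz =>
    if_neg fun hzΩ => (Metric.mem_ball.1 (hΩR hzΩ)).ne hz
  split_ifs at hz with hzΩ
  · exact Complex.exp_ne_zero _ hz
  · exact hzΩ (sub_eq_zero.1 hz ▸ hp)

theorem eventually_hasContinuousLogOn_sub_iff (hE : IsClosed E) (hp : p ∉ E) :
    ∀ᶠ q in 𝓝 p, HasContinuousLogOn (· - p) E ↔ HasContinuousLogOn (· - q) E := by
  obtain ⟨r, hr, hball⟩ := Metric.isOpen_iff.1 hE.isOpen_compl p hp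
  filter_upwards [Metric.ball_mem_nhds p (half_pos hr)] with q hq
  rw [Metric.mem_ball, dist_eq_norm] at hq
  have hpE : ∀ z ∈ E, r ≤ ‖z - p‖ := fun z hz => by
    rw [← dist_eq_norm]
    exact not_lt.1 fun h => hball h hz
  have hqE : ∀ z ∈ E, r / 2 < ‖z - q‖ := fun z hz => by
    linarith [hpE z hz, norm_sub_le_norm_sub_add_norm_sub z q p]
  constructor <;> refine fun h => h.of_norm_sub_lt (by fun_prop) fun z hz => ?_
  · rw [sub_sub_sub_cancel_left, norm_sub_rev]
    linarith [hpE z hz]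
  · rw [sub_sub_sub_cancel_left]
    exact hq.trans (hqE z hz)

theorem hasContinuousLogOn_sub_of_norm_lt (hpE : ∀ z ∈ E, ‖z‖ < ‖p‖) :
    HasContinuousLogOn (· - p) E := by
  rcases E.eq_empty_or_nonempty with rfl | ⟨e, he⟩
  · exact ⟨0, continuousOn_empty _, eqOn_empty _ _⟩
  have hp : p ≠ 0 := norm_pos_iff.1 ((norm_nonneg _).trans_lt (hpE e he))
  have hconst : HasContinuousLogOn (fun _ => -p) E :=
    ⟨fun _ => Complex.log (-p), continuousOn_const,
      fun _ _ => Complex.exp_log (neg_ne_zero.2 hp)⟩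
  exact hconst.of_norm_sub_lt (by fun_prop) fun z hz => by simpa using hpE z hz

/-- Eilenberg's criterion. -/
theorem hasContinuousLogOn_sub_iff (hE : IsCompact E) (hp : p ∉ E) :
    HasContinuousLogOn (· - p) E ↔ ¬ Bornology.IsBounded (connectedComponentIn Eᶜ p) := by
  have hpC : p ∈ connectedComponentIn Eᶜ p := mem_connectedComponentIn hp
  refine ⟨fun h hbdd => not_hasContinuousLogOn_frontier hbdd hpC (h.mono ?_), fun hunbdd => ?_⟩
  · simpa only [compl_compl] using
      frontier_connectedComponentIn_subset_compl hE.isClosed.isOpen_compl p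
  obtain ⟨R, hER⟩ := hE.isBounded.exists_norm_le
  obtain ⟨q, hqC, hqR⟩ : ∃ q ∈ connectedComponentIn Eᶜ p, R < ‖q‖ := by
    by_contra! hle
    exact hunbdd (isBounded_iff_forall_norm_le.2 ⟨R, hle⟩)
  refine isPreconnected_connectedComponentIn.induction₂'
    (fun a b => HasContinuousLogOn (· - a) E → HasContinuousLogOn (· - b) E)
    (fun a ha => ?_) (fun a b c _ _ _ hab hbc => hbc ∘ hab) hqC hpC
    (hasContinuousLogOn_sub_of_norm_lt fun z hz => (hER z hz).trans_lt hqR)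
  filter_upwards [nhdsWithin_le_nhds (eventually_hasContinuousLogOn_sub_iff hE.isClosed
    (connectedComponentIn_subset _ _ ha))] with b hb using ⟨hb.1, hb.2⟩

end PlaneSeparation

/-- A space in which Janiszewski's theorem holds: if neither of two closed sets with connected
intersection separates `p` from `q`, then neither does their union. That a set `E` does not
separate `p` from `q` is expressed by `q ∈ connectedComponentIn Eᶜ p`. -/
class JaniszewskiSpace (X : Type*) [TopologicalSpace X] : Prop where
  mem_connectedComponentIn_compl_union ⦃E₁ E₂ : Set X⦄ ⦃p q : X⦄ (isClosed_left : IsClosed E₁)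
    (isClosed_right : IsClosed E₂) (isPreconnected_inter : IsPreconnected (E₁ ∩ E₂))
    (mem_left : q ∈ connectedComponentIn E₁ᶜ p) (mem_right : q ∈ connectedComponentIn E₂ᶜ p) :
    q ∈ connectedComponentIn (E₁ ∪ E₂)ᶜ p

section OnePoint

open OnePoint Bornology

theorem infty_mem_closure_image_coe_iff {X : Type*} [TopologicalSpace X] {s : Set X} :
    ∞ ∈ closure ((↑) '' s : Set (OnePoint X)) ↔ ¬ IsCompact (closure s) := by
  constructor
  · intro hmem hcompact
    have hsub : closure ((↑) '' s : Set (OnePoint X)) ⊆ (↑) '' closure s :=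
      closure_minimal (image_mono subset_closure)
        (isClosed_image_coe.2 ⟨isClosed_closure, hcompact⟩)
    exact infty_notMem_image_coe (hsub hmem)
  · refine fun hcompact => by_contra fun hmem => hcompact ?_
    have hpreim : IsCompact ((↑) ⁻¹' closure ((↑) '' s : Set (OnePoint X)) : Set X) := by
      simpa only [preimage_compl, compl_compl] using
        ((isOpen_iff_of_mem (mem_compl hmem)).1 isClosed_closure.isOpen_compl).2
    exact hpreim.of_isClosed_subset isClosed_closure
      (closure_minimal (image_subset_iff.1 subset_closure)
        (isClosed_closure.preimage continuous_coe))

theorem infty_mem_connectedComponentIn_compl_iff_not_isCompact {X : Type*} [TopologicalSpace X]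
    [LocallyConnectedSpace X] {E : Set (OnePoint X)} {p : X} (hE : IsClosed E) (hinf : ∞ ∉ E)
    (hp : (p : OnePoint X) ∉ E) :
    ∞ ∈ connectedComponentIn Eᶜ (p : OnePoint X) ↔
      ¬ IsCompact (closure (connectedComponentIn ((↑) ⁻¹' E : Set X)ᶜ p)) := by
  set Ω : Set X := connectedComponentIn ((↑) ⁻¹' E)ᶜ p
  have hpΩ : (p : OnePoint X) ∈ (↑) '' Ω := mem_image_of_mem _ (mem_connectedComponentIn hp)
  have hopen : IsOpen ((↑) ⁻¹' E : Set X)ᶜ := (hE.preimage continuous_coe).isOpen_compl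
  rw [← infty_mem_closure_image_coe_iff]
  constructor
  · contrapose
    intro hclosure hmem
    have hfrontier : frontier ((↑) '' Ω : Set (OnePoint X)) ⊆ E := fun x hx => by
      obtain ⟨z, rfl⟩ := ne_infty_iff_exists.1 fun h => hclosure (h ▸ frontier_subset_closure hx)
      have hz : z ∈ frontier Ω := by
        rwa [← preimage_image_eq Ω coe_injective,
          ← isOpenMap_coe.preimage_frontier_eq_frontier_preimage continuous_coe]
      exact not_not.1 (frontier_connectedComponentIn_subset_compl hopen p hz)
    rcases subset_or_disjoint_closure_of_disjoint_frontier isPreconnected_connectedComponentIn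
      (isOpen_image_coe.2 hopen.connectedComponentIn)
      (disjoint_compl_left.mono (connectedComponentIn_subset Eᶜ (p : OnePoint X)) hfrontier)
      with h | h
    · exact infty_notMem_image_coe (h hmem)
    · exact disjoint_left.1 h (mem_connectedComponentIn hp) (subset_closure hpΩ)
  · intro hmem
    have hconn : IsPreconnected (insert ∞ ((↑) '' Ω : Set (OnePoint X))) :=
      (isPreconnected_connectedComponentIn.image _ continuous_coe.continuousOn).subset_closure
        (subset_insert _ _) (insert_subset hmem subset_closure)
    exact hconn.subset_connectedComponentIn (mem_insert_of_mem _ hpΩ)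
      (insert_subset hinf (image_subset_iff.2 (connectedComponentIn_subset _ _)))
      (mem_insert _ _)

theorem infty_mem_connectedComponentIn_compl_iff {E : Set (OnePoint ℂ)} {p : ℂ}
    (hE : IsClosed E) (hinf : ∞ ∉ E) (hp : (p : OnePoint ℂ) ∉ E) :
    ∞ ∈ connectedComponentIn Eᶜ (p : OnePoint ℂ) ↔
      HasContinuousLogOn (· - p) ((↑) ⁻¹' E) := by
  have hcompact : IsCompact ((↑) ⁻¹' E : Set ℂ) := by
    simpa only [preimage_compl, compl_compl] using
      ((isOpen_iff_of_mem (s := Eᶜ) hinf).1 hE.isOpen_compl).2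
  rw [infty_mem_connectedComponentIn_compl_iff_not_isCompact hE hinf hp,
    hasContinuousLogOn_sub_iff hcompact hp]
  exact not_congr ⟨fun h => h.isBounded.subset subset_closure, IsBounded.isCompact_closure⟩

theorem exists_homeomorph_sphere_apply_eq {F : Type*} [NormedAddCommGroup F]
    [InnerProductSpace ℝ F] {r : ℝ} (v w : Metric.sphere (0 : F) r) :
    ∃ h : Metric.sphere (0 : F) r ≃ₜ Metric.sphere (0 : F) r, h v = w :=
  ⟨((ℝ ∙ ((v : F) - w))ᗮ.reflection).toHomeomorph.subtype fun x => by simp,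
    Subtype.ext (Submodule.reflection_sub (by simp))⟩

theorem exists_homeomorph_onePoint_apply_eq {V : Type*} [AddCommGroup V] [Module ℝ V]
    [FiniteDimensional ℝ V] [TopologicalSpace V] [IsTopologicalAddGroup V]
    [ContinuousSMul ℝ V] [T2Space V] (p q : OnePoint V) :
    ∃ h : OnePoint V ≃ₜ OnePoint V, h p = q := by
  let e := onePointEquivSphereOfFinrankEq (V := V) (Fintype.card_fin _).symm
  obtain ⟨h, hpq⟩ := exists_homeomorph_sphere_apply_eq (e p) (e q)
  exact ⟨(e.trans h).trans e.symm, by simp [hpq]⟩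

instance : LocallyPathConnectedSpace (OnePoint ℂ) :=
  let e := onePointEquivSphereOfFinrankEq (ι := Fin 3) (V := ℂ) (by simp)
  have : Fact (Module.finrank ℝ (EuclideanSpace ℝ (Fin 3)) = 2 + 1) := ⟨by simp⟩
  have : LocallyPathConnectedSpace (Metric.sphere (0 : EuclideanSpace ℝ (Fin 3)) 1) :=
    ChartedSpace.locallyPathConnectedSpace (EuclideanSpace ℝ (Fin 2)) _
  e.isOpenEmbedding.locallyPathConnectedSpace

theorem apply_mem_connectedComponentIn_compl_image_iff {X Y : Type*} [TopologicalSpace X]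
    [TopologicalSpace Y] (h : X ≃ₜ Y) {E : Set X} {p q : X} :
    h q ∈ connectedComponentIn (h '' E)ᶜ (h p) ↔ q ∈ connectedComponentIn Eᶜ p := by
  rw [← image_compl_eq h.bijective]
  by_cases hp : p ∈ Eᶜ
  · rw [← h.image_connectedComponentIn hp, h.injective.mem_set_image]
  · rw [connectedComponentIn_eq_empty hp, connectedComponentIn_eq_empty
      (by rwa [h.injective.mem_set_image])]
    rfl

theorem infty_mem_connectedComponentIn_compl_union {E₁ E₂ : Set (OnePoint ℂ)} {p : OnePoint ℂ}
    (hE₁ : IsClosed E₁) (hE₂ : IsClosed E₂) (hconn : IsPreconnected (E₁ ∩ E₂))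
    (h₁ : ∞ ∈ connectedComponentIn E₁ᶜ p) (h₂ : ∞ ∈ connectedComponentIn E₂ᶜ p) :
    ∞ ∈ connectedComponentIn (E₁ ∪ E₂)ᶜ p := by
  have hinf₁ : ∞ ∉ E₁ := connectedComponentIn_subset _ _ h₁
  have hinf₂ : ∞ ∉ E₂ := connectedComponentIn_subset _ _ h₂
  have hp₁ : p ∉ E₁ := connectedComponentIn_nonempty_iff.1 ⟨∞, h₁⟩
  have hp₂ : p ∉ E₂ := connectedComponentIn_nonempty_iff.1 ⟨∞, h₂⟩
  induction p using OnePoint.rec with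
  | infty => exact mem_connectedComponentIn (not_or.2 ⟨hinf₁, hinf₂⟩)
  | coe p =>
    rw [infty_mem_connectedComponentIn_compl_iff hE₁ hinf₁ hp₁] at h₁
    rw [infty_mem_connectedComponentIn_compl_iff hE₂ hinf₂ hp₂] at h₂
    rw [infty_mem_connectedComponentIn_compl_iff (hE₁.union hE₂) (not_or.2 ⟨hinf₁, hinf₂⟩)
      (not_or.2 ⟨hp₁, hp₂⟩)]
    refine h₁.union h₂ (hE₁.preimage continuous_coe) (hE₂.preimage continuous_coe) ?_
    refine hconn.preimage_of_isOpenMap coe_injective isOpenMap_coe fun x hx => ?_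
    exact ne_infty_iff_exists.1 fun h => hinf₁ (h ▸ hx.1)

instance : JaniszewskiSpace (OnePoint ℂ) where
  mem_connectedComponentIn_compl_union E₁ E₂ p q hE₁ hE₂ hconn h₁ h₂ := by
    obtain ⟨h, hq⟩ := exists_homeomorph_onePoint_apply_eq q ∞
    rw [← apply_mem_connectedComponentIn_compl_image_iff h, hq] at h₁ h₂ ⊢
    rw [image_union]
    refine infty_mem_connectedComponentIn_compl_union (h.isClosedMap _ hE₁)
      (h.isClosedMap _ hE₂) ?_ h₁ h₂
    rw [← image_inter h.injective]
    exact hconn.image _ h.continuous.continuousOn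

variable {U E : Set (OnePoint ℂ)} {p q : OnePoint ℂ}

theorem infty_mem_connectedComponentIn_compl_of_subset_isSimplyConnected (hU : IsOpen U)
    (hUsc : IsSimplyConnected U) (hE : IsClosed E) (hEU : E ⊆ U) (hp : p ∉ U) (hinf : ∞ ∉ U) :
    ∞ ∈ connectedComponentIn Eᶜ p := by
  induction p using OnePoint.rec with
  | infty => exact mem_connectedComponentIn fun h => hinf (hEU h)
  | coe p =>
    have hrange : (↑) '' ((↑) ⁻¹' U : Set ℂ) = U := image_preimage_eq_of_subset
      fun x hx => ne_infty_iff_exists.1 fun h => hinf (h ▸ hx)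
    have hpreim : IsSimplyConnected ((↑) ⁻¹' U : Set ℂ) := by
      rwa [← isOpenEmbedding_coe.isEmbedding.isSimplyConnected_image, hrange]
    rw [infty_mem_connectedComponentIn_compl_iff hE (fun h => hinf (hEU h))
      (fun h => hp (hEU h))]
    have hlog : HasContinuousLogOn (· - p) ((↑) ⁻¹' U) :=
      Complex.exists_continuousOn_eqOn_exp_comp hpreim (hU.preimage continuous_coe) (by fun_prop)
        fun ⟨z, hz, hzp⟩ => hp (sub_eq_zero.1 hzp ▸ hz)
    exact hlog.mono (preimage_mono hEU)

theorem mem_connectedComponentIn_compl_of_subset_isSimplyConnected (hU : IsOpen U)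
    (hUsc : IsSimplyConnected U) (hE : IsClosed E) (hEU : E ⊆ U) (hp : p ∉ U) (hq : q ∉ U) :
    q ∈ connectedComponentIn Eᶜ p := by
  obtain ⟨h, hq_infty⟩ := exists_homeomorph_onePoint_apply_eq q ∞
  rw [← h.injective.mem_set_image (s := U)] at hp hq
  rw [hq_infty] at hq
  rw [← apply_mem_connectedComponentIn_compl_image_iff h, hq_infty]
  exact infty_mem_connectedComponentIn_compl_of_subset_isSimplyConnected (h.isOpenMap _ hU)
    (h.isSimplyConnected_image.2 hUsc) (h.isClosedMap _ hE) (image_mono hEU) hp hq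

end OnePoint

section Janiszewski

variable {X : Type*} [TopologicalSpace X] {E F O U : Set X} {p q u v w : X}

theorem connectedComponentIn_compl_frontier_eq (hU : IsOpen U) (hUconn : IsPreconnected U)
    (hu : u ∈ U) : connectedComponentIn (frontier U)ᶜ u = U := by
  have hsub : U ⊆ (frontier U)ᶜ :=
    subset_compl_iff_disjoint_left.2 (disjoint_frontier_iff_isOpen.2 hU)
  refine subset_antisymm ?_ (hUconn.subset_connectedComponentIn hu hsub)
  refine (subset_or_disjoint_closure_of_disjoint_frontier isPreconnected_connectedComponentIn hU
    (subset_compl_iff_disjoint_right.1 (connectedComponentIn_subset _ _))).resolve_right fun h => ?_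
  exact disjoint_left.1 h (mem_connectedComponentIn (hsub hu)) (subset_closure hu)

-- Split `F` into its closed parts inside and outside `O`; the latter misses `O ∪ {p, q}`.
theorem mem_connectedComponentIn_compl_of_disjoint_frontier [JaniszewskiSpace X]
    (hO : IsPreconnected O)
    (hOsep : ∀ E ⊆ O, IsClosed E → ∀ p ∈ frontier O, ∀ q ∈ frontier O,
      q ∈ connectedComponentIn Eᶜ p)
    (hF : IsClosed F) (hFO : Disjoint F (frontier O)) (hp : p ∈ frontier O)
    (hq : q ∈ frontier O) : q ∈ connectedComponentIn Fᶜ p := by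
  have hinter : F ∩ closure O = F ∩ interior O := by
    rw [closure_eq_interior_union_frontier, inter_union_distrib_left, hFO.inter_eq, union_empty]
  have hcompl : F ∩ (interior O)ᶜ = F ∩ (closure O)ᶜ := by
    rw [← sdiff_eq, ← sdiff_eq, ← sdiff_self_inter, ← hinter, sdiff_self_inter]
  have hinside : q ∈ connectedComponentIn (F ∩ interior O)ᶜ p :=
    hOsep _ (inter_subset_right.trans interior_subset) (hinter ▸ hF.inter isClosed_closure)
      p hp q hq
  have houtside : q ∈ connectedComponentIn (F ∩ (interior O)ᶜ)ᶜ p := by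
    refine hO.closure.subset_connectedComponentIn (frontier_subset_closure hp) ?_
      (frontier_subset_closure hq)
    rw [hcompl]
    exact fun x hx hxF => hxF.2 hx
  rw [← inter_union_compl F (interior O)]
  refine JaniszewskiSpace.mem_connectedComponentIn_compl_union (hinter ▸ hF.inter isClosed_closure)
    (hF.inter isOpen_interior.isClosed_compl) ?_ hinside houtside
  rw [← inter_inter_distrib_left, inter_compl_self, inter_empty]
  exact isPreconnected_empty

theorem isPreconnected_frontier [NormalSpace X] [JaniszewskiSpace X] (hO : IsPreconnected O)
    (hOsep : ∀ E ⊆ O, IsClosed E → ∀ p ∈ frontier O, ∀ q ∈ frontier O,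
      q ∈ connectedComponentIn Eᶜ p) :
    IsPreconnected (frontier O) := by
  rw [isPreconnected_iff_subset_of_fully_disjoint_closed isClosed_frontier]
  intro P Q hP hQ hcover hPQ
  by_contra! hsplit
  obtain ⟨q, hq, hqP⟩ := not_subset.1 hsplit.1
  obtain ⟨p, hp, hpQ⟩ := not_subset.1 hsplit.2
  obtain ⟨N, hN, hPN, hNQ⟩ := normal_exists_closure_subset hP hQ.isOpen_compl
    hPQ.subset_compl_right
  have hqN : q ∉ N := fun h => hNQ (subset_closure h) ((hcover hq).resolve_left hqP)
  have hpN : p ∈ N := hPN ((hcover hp).resolve_right hpQ)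
  have hdisj : Disjoint (frontier N) (frontier O) := disjoint_left.2 fun x hxN hxO => by
    rw [hN.frontier_eq] at hxN
    exact (hcover hxO).elim (fun h => hxN.2 (hPN h)) (hNQ hxN.1)
  have hqC : q ∈ connectedComponentIn (frontier N)ᶜ p :=
    mem_connectedComponentIn_compl_of_disjoint_frontier hO hOsep isClosed_frontier hdisj hp hq
  rcases subset_or_disjoint_closure_of_disjoint_frontier isPreconnected_connectedComponentIn hN
    (subset_compl_iff_disjoint_right.1 (connectedComponentIn_subset _ p)) with h | h
  · exact hqN (h hqC)
  · exact disjoint_left.1 h (mem_connectedComponentIn (disjoint_right.1 hdisj hp))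
      (subset_closure hpN)

theorem isPreconnected_frontier_connectedComponentIn_compl [NormalSpace X]
    [LocallyConnectedSpace X] [JaniszewskiSpace X] (hF : IsClosed F) (hFconn : IsPreconnected F)
    (x : X) : IsPreconnected (frontier (connectedComponentIn Fᶜ x)) := by
  have hfrontier : frontier (connectedComponentIn Fᶜ x) ⊆ F := by
    simpa only [compl_compl] using
      frontier_connectedComponentIn_subset_compl hF.isOpen_compl x
  refine isPreconnected_frontier isPreconnected_connectedComponentIn fun E hE _ p hp q hq => ?_
  have hFE : F ⊆ Eᶜ := subset_compl_comm.1 (hE.trans (connectedComponentIn_subset _ _))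
  exact hFconn.subset_connectedComponentIn (hfrontier hp) hFE (hfrontier hq)

theorem isPreconnected_frontier_of_isSimplyConnected {U : Set (OnePoint ℂ)} (hU : IsOpen U)
    (hUsc : IsSimplyConnected U) : IsPreconnected (frontier U) := by
  have hdisj := disjoint_left.1 (disjoint_frontier_iff_isOpen.2 hU)
  exact isPreconnected_frontier hUsc.isPathConnected.isConnected.isPreconnected
    fun E hEU hE p hp q hq => mem_connectedComponentIn_compl_of_subset_isSimplyConnected hU hUsc
      hE hEU (hdisj hp) (hdisj hq)

theorem mem_connectedComponentIn_compl_of_mem_closure (hu : u ∉ F) (hEF : E ⊆ F) (hwE : w ∉ E)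
    (hw : w ∈ closure (connectedComponentIn Fᶜ u)) : u ∈ connectedComponentIn Eᶜ w := by
  have hconn : IsPreconnected (insert w (connectedComponentIn Fᶜ u)) :=
    isPreconnected_connectedComponentIn.subset_closure (subset_insert _ _)
      (insert_subset hw subset_closure)
  exact hconn.subset_connectedComponentIn (mem_insert _ _)
    (insert_subset hwE ((connectedComponentIn_subset _ _).trans (compl_subset_compl.2 hEF)))
    (mem_insert_of_mem _ (mem_connectedComponentIn hu))

-- If `S` and `R` both meet `Y`, then neither `F \ S` nor `F \ R` separates `u` from `v`; these sets
-- intersect in the continuum `M`, and their union is `F`.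
theorem notSeparatedBySubcontinua_closure_inter_closure [JaniszewskiSpace X] (hF : IsClosed F)
    (hu : u ∉ F) (hv : v ∉ F) (huv : v ∉ connectedComponentIn Fᶜ u) :
    NotSeparatedBySubcontinua ((↑) ⁻¹' (closure (connectedComponentIn Fᶜ u) ∩
      closure (connectedComponentIn Fᶜ v)) : Set F) := by
  intro M S R hM h
  by_contra! hmeet
  have himage_sub (W : Set F) : ((↑) '' W : Set X) ⊆ F := image_subset_iff.2 fun x _ => x.2
  have hnot_sep {W : Set F} (hW : ¬ Disjoint ((↑) ⁻¹' (closure (connectedComponentIn Fᶜ u) ∩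
      closure (connectedComponentIn Fᶜ v))) W) :
      v ∈ connectedComponentIn ((↑) '' Wᶜ : Set X)ᶜ u := by
    obtain ⟨w, ⟨hwu, hwv⟩, hwW⟩ := not_disjoint_iff.1 hW
    have hwE : (w : X) ∉ ((↑) '' Wᶜ : Set X) := by
      rw [Subtype.val_injective.mem_set_image]
      exact not_not.2 hwW
    rw [← connectedComponentIn_eq
      (mem_connectedComponentIn_compl_of_mem_closure hu (himage_sub _) hwE hwu)]
    exact mem_connectedComponentIn_compl_of_mem_closure hv (himage_sub _) hwE hwv
  have hclosed {W : Set F} (hW : IsOpen W) : IsClosed ((↑) '' Wᶜ : Set X) :=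
    hF.isClosedEmbedding_subtypeVal.isClosedMap _ hW.isClosed_compl
  have hinter : ((↑) '' Sᶜ ∩ (↑) '' Rᶜ : Set X) = (↑) '' M := by
    rw [← image_inter Subtype.val_injective, ← compl_union, h.union_eq, compl_compl]
  have hunion : ((↑) '' Sᶜ ∪ (↑) '' Rᶜ : Set X) = F := by
    rw [← image_union, ← compl_inter, h.disjoint.inter_eq, compl_empty, image_univ,
      Subtype.range_coe]
  apply huv
  rw [← hunion]
  refine JaniszewskiSpace.mem_connectedComponentIn_compl_union (hclosed h.isOpen_left)
    (hclosed h.isOpen_right) ?_ (hnot_sep hmeet.1) (hnot_sep hmeet.2)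
  exact hinter ▸ hM.2.2.image _ continuous_subtype_val.continuousOn

end Janiszewski

section Embedding

variable {X Y : Type*} [TopologicalSpace X] [TopologicalSpace Y] {f : X → Y} {A : Set Y} {K : Set X}

theorem isSubcontinuum_image_iff (hf : IsInducing f) :
    IsSubcontinuum (f '' K) ↔ IsSubcontinuum K :=
  and_congr hf.isCompact_iff.symm (and_congr image_nonempty hf.isPreconnected_image)

theorem IsIndecomposableSet.image (hf : IsEmbedding f) (hK : IsIndecomposableSet K) :
    IsIndecomposableSet (f '' K) := by
  intro K₁ K₂ hK₁ hK₁K hK₂ hK₂K hunion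
  have himage {L : Set Y} (hL : L ⊆ f '' K) : f '' (f ⁻¹' L) = L :=
    image_preimage_eq_of_subset (hL.trans (image_subset_range f K))
  have hsub {L : Set Y} (hL : L ⊆ f '' K) : f ⁻¹' L ⊆ K :=
    (preimage_mono hL).trans_eq (preimage_image_eq K hf.injective)
  have hcont {L : Set Y} (hL : L ⊆ f '' K) (hLcont : IsSubcontinuum L) :
      IsSubcontinuum (f ⁻¹' L) := by
    rwa [← isSubcontinuum_image_iff hf.isInducing, himage hL]
  refine (hK _ _ (hcont hK₁K hK₁) (hsub hK₁K) (hcont hK₂K hK₂) (hsub hK₂K) ?_).imp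
    (fun h => ?_) fun h => ?_
  · rw [← preimage_union, hunion, preimage_image_eq K hf.injective]
  · rw [← h, himage hK₁K]
  · rw [← h, himage hK₂K]

theorem IsIrreducibleAbout.preimage (hf : IsEmbedding f) (hA : IsIrreducibleAbout (range f) A) :
    IsIrreducibleAbout univ (f ⁻¹' A) := by
  refine ⟨subset_univ _, fun K hK _ hAK => ?_⟩
  rw [← hf.injective.image_injective.eq_iff, image_univ]
  exact hA.2 _ ((isSubcontinuum_image_iff hf.isInducing).2 hK) (image_subset_range f K)
    ((image_preimage_eq_of_subset hA.1).symm.trans_subset (image_mono hAK))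

end Embedding

theorem exists_isIndecomposableSet_relInterior_nonempty {X : Type*} [TopologicalSpace X]
    [T2Space X] {A F Y : Set X} (hF : IsSubcontinuum F)
    (hA : A.Finite) (hirr : IsIrreducibleAbout F A) (hYF : Y ⊆ F) (hY : IsSubcontinuum Y)
    (hYint : (relInterior F Y).Nonempty)
    (hYsep : NotSeparatedBySubcontinua ((↑) ⁻¹' Y : Set F)) :
    ∃ K ⊆ Y, IsSubcontinuum K ∧ IsIndecomposableSet K ∧ (relInterior F K).Nonempty := by
  have : CompactSpace F := isCompact_iff_compactSpace.1 hF.1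
  have : PreconnectedSpace F := isPreconnected_iff_preconnectedSpace.1 hF.2.2
  have hcoe : IsEmbedding ((↑) : F → X) := .subtypeVal
  have hYcont : IsSubcontinuum ((↑) ⁻¹' Y : Set F) := by
    rwa [← isSubcontinuum_image_iff hcoe.isInducing, Subtype.image_preimage_coe,
      inter_eq_right.2 hYF]
  have hirr' : IsIrreducibleAbout univ ((↑) ⁻¹' A : Set F) :=
    .preimage hcoe (by rwa [Subtype.range_coe])
  obtain ⟨K, hKY, hK, hKind, hKint⟩ := exists_isIndecomposableSet_of_isIrreducibleAbout
    (hA.preimage Subtype.val_injective.injOn) hirr' hYcont hYint hYsep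
  refine ⟨(↑) '' K, image_subset_iff.2 hKY, (isSubcontinuum_image_iff hcoe.isInducing).2 hK,
    hKind.image hcoe, ?_⟩
  rwa [relInterior, preimage_image_eq K Subtype.val_injective]

theorem stmt_4_general {X : Type*} [TopologicalSpace X] [CompactSpace X] [T2Space X]
    [LocallyConnectedSpace X] [JaniszewskiSpace X] (U V : Set X) (hU : IsOpen U)
    (hUconn : IsConnected U) (hfrontier : IsPreconnected (frontier U))
    (hV : ∃ x ∈ (frontier U)ᶜ, V = connectedComponentIn (frontier U)ᶜ x) (hVU : V ≠ U)
    (hint : (relInterior (frontier U) (frontier V)).Nonempty)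
    (hirr : ∃ A : Set X, A.Finite ∧ IsIrreducibleAbout (frontier U) A) :
    ∃ K : Set X, K ⊆ frontier V ∧ IsSubcontinuum K ∧ IsIndecomposableSet K ∧
      (relInterior (frontier U) K).Nonempty := by
  obtain ⟨v, hv, rfl⟩ := hV
  obtain ⟨u, hu⟩ := hUconn.nonempty
  obtain ⟨A, hA, hirr⟩ := hirr
  have hUcomp : connectedComponentIn (frontier U)ᶜ u = U :=
    connectedComponentIn_compl_frontier_eq hU hUconn.isPreconnected hu
  have hsub : frontier (connectedComponentIn (frontier U)ᶜ v) ⊆ frontier U := by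
    simpa only [compl_compl] using
      frontier_connectedComponentIn_subset_compl isClosed_frontier.isOpen_compl v
  obtain ⟨y, hy⟩ := hint.mono interior_subset
  have hsep := notSeparatedBySubcontinua_closure_inter_closure isClosed_frontier
    (connectedComponentIn_nonempty_iff.1 ⟨u, hUcomp.symm ▸ hu⟩) hv
    fun h => hVU (connectedComponentIn_eq h ▸ hUcomp)
  refine exists_isIndecomposableSet_relInterior_nonempty
    ⟨isClosed_frontier.isCompact, ⟨y, y.2⟩, hfrontier⟩ hA hirr hsub
    ⟨isClosed_frontier.isCompact, ⟨y, hy⟩,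
      isPreconnected_frontier_connectedComponentIn_compl isClosed_frontier hfrontier v⟩
    hint (hsep.mono (preimage_mono fun z hz => ⟨?_, frontier_subset_closure hz⟩))
  exact hUcomp.symm ▸ frontier_subset_closure (hsub hz)

/-- Let `U ⊆ ℂ∞` be a simply connected open set whose boundary
`X = ∂U` has at least two points, and let `V ≠ U` be a connected component of `ℂ∞ \ X`
such that `∂V` has nonempty interior relative to `X`.  If `X` is irreducible about some
finite subset of `X`, then `∂V` contains an indecomposable subcontinuum with nonempty
interior relative to `X`. -/
theorem stmt_4 (U V : Set RiemannSphere) (hUopen : IsOpen U)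
    (hUsc : SimplyConnectedSpace U) (hbd : (frontier U).Nontrivial)
    (hV : ∃ x ∈ (frontier U)ᶜ, V = connectedComponentIn (frontier U)ᶜ x)
    (hVU : V ≠ U)
    (hint : (relInterior (frontier U) (frontier V)).Nonempty)
    (hirr : ∃ A : Set RiemannSphere, A.Finite ∧ A ⊆ frontier U ∧
      ∀ K : Set RiemannSphere, IsSubcontinuum K → K ⊆ frontier U → A ⊆ K →
        K = frontier U) :
    ∃ K : Set RiemannSphere, K ⊆ frontier V ∧ IsSubcontinuum K ∧
      IsIndecomposableSet K ∧ (relInterior (frontier U) K).Nonempty := by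
  exact stmt_4_general U V hUopen (isConnected_iff_connectedSpace.2 inferInstance)
    (isPreconnected_frontier_of_isSimplyConnected hUopen hUsc) hV hVU hint hirr
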